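/- Let X = [0,1] × [−1,1] ⊂ ℝ² with the Euclidean metric, and let Y be the disjoint union of X and the interval [0, 1/2]. Let D be any pseudometric on Y whose restriction to the copy of X is the Euclidean metric and whose restriction to the copy of [0, 1/2] is the standard metric on ℝ. Let ∼ be the equivalence relation on Y generated by identifying t ∈ [0, 1/2] with (2t, 0) ∈ X, and let D̄ be the associated quotient pseudometric on Y/∼. Then D̄([(0,0)], [(1,0)]) ≤ 1/2. In particular, since the Euclidean distance between (0,0) and (1,0) equals 1, the quotient pseudometric restricted to the image of X does not agree with the Euclidean metric. -/

import Mathlib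

open Set

/-- The quotient pseudometric associated with a pseudometric `d` on `X` and an equivalence
relation `r` on `X`: `d̄(x̄, ȳ) = inf Σ_{i=1}^n d(x_i, y_i)` over all finite chains
`(x_1, y_1, …, x_n, y_n)` with `x_1 ∼ x`, `y_n ∼ y`, and `y_i ∼ x_{i+1}` for `i < n`. -/
noncomputable def quotientDist {X : Type*} (d : X → X → ℝ) (r : X → X → Prop)
    (x y : X) : ℝ :=
  sInf {c : ℝ | ∃ (n : ℕ) (xs ys : ℕ → X), 1 ≤ n ∧ r (xs 1) x ∧ r (ys n) y ∧
    (∀ i : ℕ, 1 ≤ i → i < n → r (ys i) (xs (i + 1))) ∧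
    c = ∑ i ∈ Finset.Icc 1 n, d (xs i) (ys i)}

/-- The basic identification of `t ∈ [0, 1/2]` (in the interval copy) with the point
`(2t, 0)` of the rectangle copy, in the disjoint union of the Euclidean plane and `ℝ`. -/
def glueBase (u v : EuclideanSpace ℝ (Fin 2) ⊕ ℝ) : Prop :=
  ∃ (t : ℝ) (z : EuclideanSpace ℝ (Fin 2)), t ∈ Set.Icc (0 : ℝ) (1 / 2) ∧
    z 0 = 2 * t ∧ z 1 = 0 ∧ u = Sum.inr t ∧ v = Sum.inl z

/-- The quotient pseudometric is bounded by the distance between any representatives. -/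
theorem quotientDist_le_of_rel {X : Type*} {d : X → X → ℝ} {r : X → X → Prop}
    (hd : ∀ u v, 0 ≤ d u v) {x y a b : X} (ha : r a x) (hb : r b y) :
    quotientDist d r x y ≤ d a b := by
  refine csInf_le ⟨0, ?_⟩ ⟨1, fun _ => a, fun _ => b, le_rfl, ha, hb, ?_, by simp⟩
  · rintro c ⟨n, xs, ys, -, -, -, -, rfl⟩
    exact Finset.sum_nonneg fun i _ => hd _ _
  · intro i hi hi'
    omega

/-- **Metric gluing can shrink distances.** Let `Y` be the disjoint union of the rectangle
`X = [0,1] × [-1,1]` (in the Euclidean plane) and the interval `[0, 1/2]`, and let `D` be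
any pseudometric on `Y` restricting to the Euclidean metric on the copy of `X` and to the
standard metric on the copy of `[0, 1/2]`. Let `∼` be the equivalence relation generated
by identifying `t ∈ [0, 1/2]` with `(2t, 0) ∈ X` and let `D̄` be the quotient
pseudometric. Then `D̄([(0,0)], [(1,0)]) ≤ 1/2`, even though the Euclidean distance
between `(0,0)` and `(1,0)` equals `1`; so the quotient pseudometric does not agree with
the Euclidean metric on the image of `X`. -/
theorem quotient_pseudometric_shrinks_rectangle
    (D : EuclideanSpace ℝ (Fin 2) ⊕ ℝ → EuclideanSpace ℝ (Fin 2) ⊕ ℝ → ℝ)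
    (hD_nonneg : ∀ u v, 0 ≤ D u v) (hD_symm : ∀ u v, D u v = D v u)
    (hD_refl : ∀ u, D u u = 0) (hD_tri : ∀ u v w, D u w ≤ D u v + D v w)
    (hD_rect : ∀ p q : EuclideanSpace ℝ (Fin 2),
      p 0 ∈ Set.Icc (0 : ℝ) 1 → p 1 ∈ Set.Icc (-1 : ℝ) 1 →
      q 0 ∈ Set.Icc (0 : ℝ) 1 → q 1 ∈ Set.Icc (-1 : ℝ) 1 →
      D (Sum.inl p) (Sum.inl q) = dist p q)
    (hD_interval : ∀ s t : ℝ, s ∈ Set.Icc (0 : ℝ) (1 / 2) → t ∈ Set.Icc (0 : ℝ) (1 / 2) →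
      D (Sum.inr s) (Sum.inr t) = |s - t|)
    (z₀ z₁ : EuclideanSpace ℝ (Fin 2))
    (hz₀ : z₀ 0 = 0 ∧ z₀ 1 = 0) (hz₁ : z₁ 0 = 1 ∧ z₁ 1 = 0) :
    quotientDist D (Relation.EqvGen glueBase) (Sum.inl z₀) (Sum.inl z₁) ≤ 1 / 2 ∧
      dist z₀ z₁ = 1 := by
  have hzero : (0 : ℝ) ∈ Set.Icc (0 : ℝ) (1 / 2) := by norm_num
  have hhalf : (1 / 2 : ℝ) ∈ Set.Icc (0 : ℝ) (1 / 2) := by norm_num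
  constructor
  · calc quotientDist D (Relation.EqvGen glueBase) (Sum.inl z₀) (Sum.inl z₁)
        ≤ D (Sum.inr 0) (Sum.inr (1 / 2)) :=
          quotientDist_le_of_rel hD_nonneg
            (.rel _ _ ⟨0, z₀, hzero, by simp [hz₀.1], hz₀.2, rfl, rfl⟩)
            (.rel _ _ ⟨1 / 2, z₁, hhalf, by simp [hz₁.1], hz₁.2, rfl, rfl⟩)
      _ = |0 - 1 / 2| := hD_interval 0 (1 / 2) hzero hhalf
      _ = 1 / 2 := by norm_num [abs_of_pos]
  · simp [EuclideanSpace.dist_eq, Fin.sum_univ_two, hz₀, hz₁]
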